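/- Let G be a graph. The following are equivalent: (1) G admits two disjoint maximum independent sets; (2) there exists a matching M of size α(G) in G such that the subgraph induced by the set V(M) of vertices covered by M is bipartite; (3) there exists a set A ⊆ V(G) such that the induced subgraph G[V(G) \ A] is a bipartite graph having a perfect matching, and this perfect matching has size α(G). -/

import Mathlib

open SimpleGraph

/-- A set of vertices is independent if its elements are pairwise nonadjacent. -/
def IsIndep {V : Type*} (G : SimpleGraph V) (S : Set V) : Prop :=
  S.Pairwise fun a b => ¬ G.Adj a b

/-- The closed neighborhood `N[S]` of a set of vertices. -/
def closedNbhd {V : Type*} (G : SimpleGraph V) (S : Set V) : Set V :=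
  S ∪ {x | ∃ s ∈ S, G.Adj s x}

/-- The open neighborhood `N(S) = N[S] \ S` of a set of vertices. -/
def openNbhd {V : Type*} (G : SimpleGraph V) (S : Set V) : Set V :=
  closedNbhd G S \ S

/-- `S` dominates `T` if `T ⊆ N[S]`. -/
def Dominates {V : Type*} (G : SimpleGraph V) (S T : Set V) : Prop :=
  T ⊆ closedNbhd G S

/-- `N₂(v)`: the set of vertices at distance exactly 2 from `v`. -/
def N2 {V : Type*} (G : SimpleGraph V) (v : V) : Set V :=
  {u | u ≠ v ∧ ¬ G.Adj v u ∧ ∃ w, G.Adj v w ∧ G.Adj w u}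

/-- A maximal independent set of the subgraph of `G` induced by `A`. -/
def IsMaximalIndepOn {V : Type*} (G : SimpleGraph V) (A S : Set V) : Prop :=
  S ⊆ A ∧ IsIndep G S ∧ ∀ T, T ⊆ A → IsIndep G T → S ⊆ T → S = T

/-- A maximal independent set of `G`. -/
def IsMaximalIndep {V : Type*} (G : SimpleGraph V) (S : Set V) : Prop :=
  IsMaximalIndepOn G Set.univ S

/-- A maximum independent set of the subgraph of `G` induced by `A`. -/
def IsMaxIndepOn {V : Type*} (G : SimpleGraph V) (A S : Set V) : Prop :=
  S ⊆ A ∧ IsIndep G S ∧ ∀ T, T ⊆ A → IsIndep G T → T.ncard ≤ S.ncard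

/-- A maximum independent set of `G`. -/
def IsMaxIndep {V : Type*} (G : SimpleGraph V) (S : Set V) : Prop :=
  IsMaxIndepOn G Set.univ S

/-- The independence number of the subgraph of `G` induced by `A`. -/
noncomputable def alphaOn {V : Type*} (G : SimpleGraph V) (A : Set V) : ℕ :=
  sSup {n | ∃ S, S ⊆ A ∧ IsIndep G S ∧ S.ncard = n}

/-- The independence number `α(G)`. -/
noncomputable def alpha {V : Type*} (G : SimpleGraph V) : ℕ :=
  alphaOn G Set.univ

/-- The subgraph of `G` induced by `A` is well-covered. -/
def WellCoveredOn {V : Type*} (G : SimpleGraph V) (A : Set V) : Prop :=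
  ∀ S, IsMaximalIndepOn G A S → IsMaxIndepOn G A S

/-- `G` is well-covered: every maximal independent set is maximum. -/
def WellCovered {V : Type*} (G : SimpleGraph V) : Prop :=
  WellCoveredOn G Set.univ

/-- The subgraph of `G` induced by `A` is in the class `W₂`. -/
def W2On {V : Type*} (G : SimpleGraph V) (A : Set V) : Prop :=
  ∀ S₁ S₂ : Set V, S₁ ⊆ A → S₂ ⊆ A → IsIndep G S₁ → IsIndep G S₂ → Disjoint S₁ S₂ →
    ∃ T₁ T₂ : Set V, S₁ ⊆ T₁ ∧ S₂ ⊆ T₂ ∧ IsMaxIndepOn G A T₁ ∧ IsMaxIndepOn G A T₂ ∧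
      Disjoint T₁ T₂

/-- `G` belongs to the class `W₂`: every two pairwise disjoint independent sets are
included in two pairwise disjoint maximum independent sets. -/
def W2 {V : Type*} (G : SimpleGraph V) : Prop :=
  W2On G Set.univ

/-- `v` is a shedding vertex: for every independent set `S ⊆ V(G) \ N[v]` there exists
`u ∈ N(v)` such that `S ∪ {u}` is independent. -/
def Shedding {V : Type*} (G : SimpleGraph V) (v : V) : Prop :=
  ∀ S : Set V, Disjoint S (closedNbhd G {v}) → IsIndep G S →
    ∃ u ∈ G.neighborSet v, IsIndep G (insert u S)

/-- The edge `xy` is relating: there is an independent set `S ⊆ V(G) \ N[{x,y}]` such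
that both `S ∪ {x}` and `S ∪ {y}` are maximal independent sets of `G`. -/
def Relating {V : Type*} (G : SimpleGraph V) (x y : V) : Prop :=
  ∃ S : Set V, IsIndep G S ∧ Disjoint S (closedNbhd G {x, y}) ∧
    IsMaximalIndep G (insert x S) ∧ IsMaximalIndep G (insert y S)

/-- `G` contains no cycle of length `k` (as a subgraph). -/
def CycleFree {V : Type*} (G : SimpleGraph V) (k : ℕ) : Prop :=
  ∀ (u : V) (w : G.Walk u u), w.IsCycle → w.length ≠ k

/-- A vertex is simplicial if its closed neighborhood is a clique. -/
def Simplicial {V : Type*} (G : SimpleGraph V) (v : V) : Prop :=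
  G.IsClique (closedNbhd G {v})

lemma indep_le_alpha {V : Type*} [Fintype V] {G : SimpleGraph V} {S : Set V}
    (h : IsIndep G S) : S.ncard ≤ alpha G := by
  apply le_csSup
  · refine ⟨(Set.univ : Set V).ncard, ?_⟩
    rintro n ⟨S, hS, -, rfl⟩
    exact Set.ncard_le_ncard hS
  · exact ⟨S, Set.subset_univ _, h, rfl⟩

lemma maxIndep_iff {V : Type*} [Fintype V] {G : SimpleGraph V} {S : Set V} :
    IsMaxIndep G S ↔ IsIndep G S ∧ S.ncard = alpha G := by
  constructor
  · rintro ⟨-, h, hm⟩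
    refine ⟨h, le_antisymm (indep_le_alpha h) ?_⟩
    apply csSup_le
    · exact ⟨_, S, Set.subset_univ _, h, rfl⟩
    · rintro n ⟨T, hT, hi, rfl⟩
      exact hm T hT hi
  · rintro ⟨h, hc⟩
    exact ⟨Set.subset_univ _, h, fun T _ hi => hc ▸ indep_le_alpha hi⟩

lemma matching_count {V : Type*} {G : SimpleGraph V} (M : G.Subgraph)
    (hM : M.IsMatching) (P : V → Prop) (hP : ∀ u v, M.Adj u v → (P u ↔ ¬ P v)) :
    {v | v ∈ M.verts ∧ P v}.ncard = M.edgeSet.ncard := by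
  refine Set.ncard_congr (fun v hv => (hM.toEdge ⟨v, hv.1⟩ : Sym2 V)) ?_ ?_ ?_
  · intro v hv
    exact (hM.toEdge ⟨v, hv.1⟩).2
  · intro u v hu hv h
    obtain ⟨w, hw, -⟩ := hM hu.1
    obtain ⟨x, hx, -⟩ := hM hv.1
    simp only [hM.toEdge_eq_of_adj hw, hM.toEdge_eq_of_adj hx] at h
    rw [Sym2.eq_iff] at h
    rcases h with h | h
    · exact h.1
    · have := hP u w hw
      rw [h.2] at this
      exact absurd hv.2 (this.1 hu.2)
  · intro e he
    induction e using Sym2.ind with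
    | _ a b =>
      have hab : M.Adj a b := he
      by_cases ha : P a
      · exact ⟨a, ⟨M.edge_vert hab, ha⟩, by rw [hM.toEdge_eq_of_adj hab]⟩
      · have hb : P b := by
          by_contra hb
          exact ha ((hP a b hab).2 hb)
        exact ⟨b, ⟨M.edge_vert hab.symm, hb⟩, by
          rw [hM.toEdge_eq_of_adj hab.symm]; exact Sym2.eq_swap⟩

lemma exists_pm {W : Type*} [Fintype W] (H : SimpleGraph W) (S T : Set W)
    (hST : S ∪ T = Set.univ) (hd : Disjoint S T) (hS : IsIndep H S) (hT : IsIndep H T)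
    (hc : S.ncard = T.ncard) (hm : ∀ X, IsIndep H X → X.ncard ≤ T.ncard) :
    ∃ M : H.Subgraph, M.IsPerfectMatching ∧ M.edgeSet.ncard = T.ncard := by
  classical
  have hall : ∃ f : S → W, Function.Injective f ∧ ∀ x, f x ∈ T ∧ H.Adj x (f x) := by
    rw [← Fintype.all_card_le_filter_rel_iff_exists_injective
      (fun (s : S) (t : W) => t ∈ T ∧ H.Adj s t)]
    intro A
    set N : Set W := {b | ∃ a ∈ A, b ∈ T ∧ H.Adj a b} with hN
    set X : Set W := Subtype.val '' (A : Set S) with hX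
    have hXS : X ⊆ S := by rintro _ ⟨a, -, rfl⟩; exact a.2
    have hNT : N ⊆ T := by rintro b ⟨a, -, h, -⟩; exact h
    have h1 : X.ncard = A.card := by
      rw [hX, Set.ncard_image_of_injective _ Subtype.val_injective, Set.ncard_coe_finset]
    have h2 : ({b | ∃ a ∈ A, b ∈ T ∧ H.Adj a b} : Finset W).card = N.ncard := by
      rw [← Set.ncard_coe_finset]; congr 1; ext; simp [hN]
    have hnadj : ∀ x ∈ X, ∀ t ∈ T \ N, ¬ H.Adj x t := by
      rintro _ ⟨a, ha, rfl⟩ t ht h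
      exact ht.2 ⟨a, ha, ht.1, h⟩
    have hi : IsIndep H (X ∪ (T \ N)) := by
      rintro a (ha | ha) b (hb | hb) hab
      · exact hS (hXS ha) (hXS hb) hab
      · exact hnadj a ha b hb
      · exact fun h => hnadj b hb a ha h.symm
      · exact hT ha.1 hb.1 hab
    have h3 := hm _ hi
    rw [Set.ncard_union_eq (hd.mono hXS Set.sdiff_subset)] at h3
    have h4 := Set.ncard_sdiff_add_ncard_of_subset hNT
    rw [h2, ← h1]
    omega
  obtain ⟨f, hf, hfT⟩ := hall
  have hbij : Function.Bijective (fun x : S => (⟨f x, (hfT x).1⟩ : T)) := by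
    rw [Fintype.bijective_iff_injective_and_card]
    refine ⟨fun a b h => hf (by simpa using h), ?_⟩
    rw [← Nat.card_eq_fintype_card, ← Nat.card_eq_fintype_card]
    exact hc
  obtain ⟨M, hMv, hM⟩ := Subgraph.IsMatching.exists_of_disjoint_sets_of_equiv (G := H) hd
    (Equiv.ofBijective _ hbij) (fun v => (hfT v).2)
  refine ⟨M, ⟨hM, fun v => by rw [hMv, hST]; trivial⟩, ?_⟩
  rw [← matching_count M hM (· ∈ T)]
  · congr 1; ext v; simp [hMv]
  · intro u v huv
    have hne := huv.adj_sub.ne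
    constructor
    · exact fun hu hv => hT hu hv hne huv.adj_sub
    · intro hv
      by_contra hu
      have : ∀ x, x ∉ T → x ∈ S := fun x hx =>
        ((hST ▸ Set.mem_univ x : x ∈ S ∪ T)).resolve_right hx
      exact hS (this u hu) (this v hv) hne huv.adj_sub

lemma one_three {V : Type*} [Fintype V] (G : SimpleGraph V)
    (h : ∃ S T : Set V, IsMaxIndep G S ∧ IsMaxIndep G T ∧ Disjoint S T) :
    ∃ A : Set V, (G.induce Aᶜ).Colorable 2 ∧
        ∃ M : (G.induce Aᶜ).Subgraph, M.IsPerfectMatching ∧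
          M.edgeSet.ncard = alpha G := by
  classical
  obtain ⟨S, T, hS, hT, hd⟩ := h
  rw [maxIndep_iff] at hS hT
  refine ⟨(S ∪ T)ᶜ, ?_, ?_⟩
  · refine ⟨Coloring.mk (fun v => if (v : V) ∈ S then (0 : Fin 2) else 1) ?_⟩
    rintro ⟨u, hu⟩ ⟨v, hv⟩ huv
    rw [compl_compl] at hu hv
    have huv : G.Adj u v := huv
    by_cases h1 : u ∈ S <;> by_cases h2 : v ∈ S <;> simp [h1, h2]
    · exact hS.1 h1 h2 huv.ne huv
    · exact hT.1 (hu.resolve_left h1) (hv.resolve_left h2) huv.ne huv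
  · have key : ∀ X : Set V, X ⊆ S ∪ T →
        (Subtype.val ⁻¹' X : Set ↥((S ∪ T)ᶜᶜ)).ncard = X.ncard := by
      intro X hX
      rw [← Set.ncard_image_of_injective _ Subtype.val_injective, Subtype.image_preimage_coe,
        compl_compl, Set.inter_eq_right.2 hX]
    have ki : ∀ X : Set V, IsIndep G X →
        IsIndep (G.induce (S ∪ T)ᶜᶜ) (Subtype.val ⁻¹' X) := by
      intro X hX a ha b hb hab h
      exact hX ha hb (fun h => hab (Subtype.ext h)) h
    have := exists_pm (G.induce (S ∪ T)ᶜᶜ) (Subtype.val ⁻¹' S) (Subtype.val ⁻¹' T) ?_ ?_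
      (ki S hS.1) (ki T hT.1) ?_ ?_
    · rwa [key T Set.subset_union_right, hT.2] at this
    · ext ⟨v, hv⟩
      rw [compl_compl] at hv
      simpa using hv
    · exact hd.preimage _
    · rw [key S Set.subset_union_left, key T Set.subset_union_right, hS.2, hT.2]
    · intro X hX
      rw [key T Set.subset_union_right, hT.2,
        ← Set.ncard_image_of_injective X Subtype.val_injective]
      apply indep_le_alpha
      rintro _ ⟨a, ha, rfl⟩ _ ⟨b, hb, rfl⟩ hab h
      exact hX ha hb (fun h => hab (congrArg _ h)) h

lemma three_two {V : Type*} [Fintype V] (G : SimpleGraph V)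
    (h : ∃ A : Set V, (G.induce Aᶜ).Colorable 2 ∧
        ∃ M : (G.induce Aᶜ).Subgraph, M.IsPerfectMatching ∧
          M.edgeSet.ncard = alpha G) :
    ∃ M : G.Subgraph, M.IsMatching ∧ M.edgeSet.ncard = alpha G ∧
        (G.induce M.support).Colorable 2 := by
  obtain ⟨A, hA, M, hM, hc⟩ := h
  have hinj : Function.Injective (Embedding.induce (G := G) Aᶜ).toHom :=
    (Embedding.induce (G := G) Aᶜ).injective
  have hMm := hM.1.map (Embedding.induce (G := G) Aᶜ).toHom hinj
  refine ⟨M.map (Embedding.induce (G := G) Aᶜ).toHom, hMm, ?_, ?_⟩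
  · rw [Subgraph.edgeSet_map, Set.ncard_image_of_injective _ (Sym2.map.injective hinj), hc]
  · have hsub : (M.map (Embedding.induce (G := G) Aᶜ).toHom).support ⊆ Aᶜ := by
      rw [hMm.support_eq_verts]
      rintro _ ⟨a, -, rfl⟩
      exact a.2
    exact hA.of_hom (G.induceHomOfLE hsub).toHom

lemma two_one {V : Type*} [Fintype V] (G : SimpleGraph V)
    (h : ∃ M : G.Subgraph, M.IsMatching ∧ M.edgeSet.ncard = alpha G ∧
        (G.induce M.support).Colorable 2) :
    ∃ S T : Set V, IsMaxIndep G S ∧ IsMaxIndep G T ∧ Disjoint S T := by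
  obtain ⟨M, hM, hc, ⟨C⟩⟩ := h
  rw [hM.support_eq_verts] at C
  set P : V → Prop := fun v => ∃ h : v ∈ M.verts, C ⟨v, h⟩ = 0 with hPdef
  have hval : ∀ u v (hu : u ∈ M.verts) (hv : v ∈ M.verts), G.Adj u v →
      C ⟨u, hu⟩ ≠ C ⟨v, hv⟩ := fun u v hu hv h => C.valid (by simpa using h)
  have hind : ∀ u v, u ∈ M.verts → v ∈ M.verts → G.Adj u v → (P u ↔ ¬ P v) := by
    intro u v hu hv h
    have := hval u v hu hv h
    simp only [hPdef, hu, hv, exists_true_left]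
    omega
  have hP : ∀ u v, M.Adj u v → (P u ↔ ¬ P v) := fun u v h =>
    hind u v (M.edge_vert h) (M.edge_vert h.symm) h.adj_sub
  have hP' : ∀ u v, M.Adj u v → (¬ P u ↔ ¬ ¬ P v) := fun u v h => by
    rw [hP u v h]
  refine ⟨{v | v ∈ M.verts ∧ P v}, {v | v ∈ M.verts ∧ ¬ P v}, ?_, ?_, ?_⟩
  · rw [maxIndep_iff]
    exact ⟨fun u hu v hv _ h => (hind u v hu.1 hv.1 h).1 hu.2 hv.2,
      (matching_count M hM P hP).trans hc⟩
  · rw [maxIndep_iff]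
    exact ⟨fun u hu v hv _ h => hu.2 ((hind u v hu.1 hv.1 h).2 hv.2),
      (matching_count M hM (fun v => ¬ P v) hP').trans hc⟩
  · rw [Set.disjoint_left]
    exact fun v hv hv' => hv'.2 hv.2

/-- For a graph `G`, the following are equivalent: (1) `G` admits two
disjoint maximum independent sets; (2) there is a matching `M` of size `α(G)` such that
the subgraph induced by the vertices covered by `M` is bipartite; (3) there is a set
`A ⊆ V(G)` such that `G[V(G) \ A]` is a bipartite graph having a perfect matching of
size `α(G)`. -/
theorem stmt17 {V : Type*} [Fintype V] (G : SimpleGraph V) :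
    ((∃ S T : Set V, IsMaxIndep G S ∧ IsMaxIndep G T ∧ Disjoint S T) ↔
      (∃ M : G.Subgraph, M.IsMatching ∧ M.edgeSet.ncard = alpha G ∧
        (G.induce M.support).Colorable 2)) ∧
    ((∃ S T : Set V, IsMaxIndep G S ∧ IsMaxIndep G T ∧ Disjoint S T) ↔
      (∃ A : Set V, (G.induce Aᶜ).Colorable 2 ∧
        ∃ M : (G.induce Aᶜ).Subgraph, M.IsPerfectMatching ∧
          M.edgeSet.ncard = alpha G)) := by
  exact ⟨⟨fun h => three_two G (one_three G h), two_one G⟩,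
    ⟨one_three G, fun h => two_one G (three_two G h)⟩⟩
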